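/- A feasible anonymous linear Groves mechanism in a multi-unit auction with unit demand is undominated only if its total payment function, written as C_0 + C_1[θ]_1 + ... + C_n[θ]_n, vanishes identically on one of the following regions: (a) {θ : [θ]_1 = U}, (b) {θ : [θ]_k = [θ]_{k+1}} for some k ∈ {1,...,n−1}, or (c) {θ : [θ]_n = L}. -/

import Mathlib

/-- The `k`-th highest element (1-indexed) of a multiset of reals. -/
noncomputable def kthHighest (m : Multiset ℝ) (k : ℕ) : ℝ :=
  (m.sort (· ≤ ·)).getD (Multiset.card m - k) 0

/-- The multiset of all bids. -/
def allBids {n : ℕ} (θ : Fin n → ℝ) : Multiset ℝ :=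
  (Finset.univ.val : Multiset (Fin n)).map θ

/-- The multiset of bids of players other than `i`. -/
def otherBids {n : ℕ} (θ : Fin n → ℝ) (i : Fin n) : Multiset ℝ :=
  ((Finset.univ.erase i).val : Multiset (Fin n)).map θ

/-- Total payment of the Groves mechanism given (player-wise) by
`h' : Fin n → Multiset ℝ → ℝ`. -/
noncomputable def totalPay {n : ℕ} (m : ℕ) (h' : Fin n → Multiset ℝ → ℝ)
    (θ : Fin n → ℝ) : ℝ :=
  -(m : ℝ) * kthHighest (allBids θ) (m + 1) + ∑ i, h' i (otherBids θ i)

/-- The mechanism given by `h` is dominated by some feasible Groves mechanism. -/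
def DominatedMech (n m : ℕ) (L U : ℝ) (h : Multiset ℝ → ℝ) : Prop :=
  ∃ h' : Fin n → Multiset ℝ → ℝ,
    (∀ θ : Fin n → ℝ, (∀ i, θ i ∈ Set.Icc L U) → totalPay m h' θ ≤ 0) ∧
    (∀ θ : Fin n → ℝ, (∀ i, θ i ∈ Set.Icc L U) → ∀ i : Fin n,
      h (otherBids θ i) ≤ h' i (otherBids θ i)) ∧
    (∃ θ : Fin n → ℝ, (∀ i, θ i ∈ Set.Icc L U) ∧ ∃ i : Fin n,
      h (otherBids θ i) < h' i (otherBids θ i))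

/-- Relabelling of positions that leaves out position `i`. -/
def skipIndex (i j : ℕ) : ℕ := if j < i then j else j + 1

/-- Relabelling of positions: composed with it, a sequence `e 0, …, e (N + 1)` becomes
`e 1, …, e N` with the entry `e k` inserted. -/
def repeatIndex (k i : ℕ) : ℕ := if i < k then i + 1 else i

lemma repeatIndex_mono (k : ℕ) : Monotone (repeatIndex k) := by
  intro i j hij
  unfold repeatIndex
  split_ifs <;> omega

lemma skipIndex_mono (k : ℕ) : Monotone (skipIndex k) := by
  intro i j hij
  unfold skipIndex
  split_ifs <;> omega

/-- The total payment as a function of the multiset of bids. -/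
noncomputable def multisetPay (m : ℕ) (h : Multiset ℝ → ℝ) (M : Multiset ℝ) : ℝ :=
  -(m : ℝ) * kthHighest M (m + 1) + (M.map fun x => h (M.erase x)).sum

/-- The linear part of the total payment on decreasing bid sequences. -/
noncomputable def linearPay (N m : ℕ) (a : ℕ → ℝ) : (ℕ → ℝ) →ₗ[ℝ] ℝ :=
  (-(m : ℝ)) • LinearMap.proj m +
    ∑ i ∈ Finset.range (N + 1), ∑ j ∈ Finset.Icc 1 N, a j • LinearMap.proj (skipIndex i (j - 1))

lemma allBids_eq_cons_otherBids {n : ℕ} (θ : Fin n → ℝ) (i : Fin n) :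
    allBids θ = θ i ::ₘ otherBids θ i := by
  unfold allBids otherBids
  rw [← Multiset.map_cons, Finset.erase_val, Multiset.cons_erase (Finset.mem_univ i)]

lemma totalPay_eq_multisetPay {n : ℕ} (m : ℕ) (h : Multiset ℝ → ℝ) (θ : Fin n → ℝ) :
    totalPay m (fun _ => h) θ = multisetPay m h (allBids θ) := by
  have key : ∀ i, otherBids θ i = (allBids θ).erase (θ i) := fun i => by
    rw [allBids_eq_cons_otherBids θ i, Multiset.erase_cons_head]
  simp only [totalPay, multisetPay, key]
  congr 1
  rw [Finset.sum_eq_multiset_sum, show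
    (allBids θ).map (fun x => h ((allBids θ).erase x)) =
      (Finset.univ.val).map (fun i => h ((allBids θ).erase (θ i))) by
    conv_lhs => rw [show allBids θ = Finset.univ.val.map θ from rfl]
    rw [Multiset.map_map]; rfl]

lemma kthHighest_map_range {s : ℕ → ℝ} (hs : Antitone s) {n k : ℕ} (hk : 1 ≤ k) (hkn : k ≤ n) :
    kthHighest ((Multiset.range n).map s) k = s (k - 1) := by
  have hsort : ((Multiset.range n).map s).sort (· ≤ ·) = ((List.range n).map s).reverse := by
    refine List.Perm.eq_of_pairwise' (r := (· ≤ ·)) (Multiset.pairwise_sort _ _) ?_ ?_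
    · rw [List.pairwise_reverse, List.pairwise_map]
      exact (List.pairwise_lt_range (n := n)).imp fun hab => hs hab.le
    · rw [← Multiset.coe_eq_coe, Multiset.sort_eq, Multiset.coe_reverse]
      rfl
  rw [kthHighest, hsort, Multiset.card_map, Multiset.card_range,
    List.getD_eq_getElem _ _ (by simp; omega)]
  simp only [List.getElem_reverse, List.getElem_map, List.getElem_range, List.length_map,
    List.length_range]
  congr 1
  omega

lemma range_erase_eq_map_skipIndex {N i : ℕ} (hi : i < N + 1) :
    (Multiset.range (N + 1)).erase i = (Multiset.range N).map (skipIndex i) := by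
  refine (Multiset.Nodup.ext ((Multiset.nodup_range _).erase _) ?_).2 ?_
  · refine (Multiset.nodup_range _).map fun x y hxy => ?_
    simp only [skipIndex] at hxy
    split_ifs at hxy <;> omega
  · intro x
    rw [Multiset.Nodup.mem_erase_iff (Multiset.nodup_range _), Multiset.mem_map]
    simp only [Multiset.mem_range, skipIndex]
    constructor
    · rintro ⟨hne, hx⟩
      rcases lt_or_gt_of_ne hne with hlt | hgt
      · exact ⟨x, by omega, if_pos hlt⟩
      · exact ⟨x - 1, by omega, by rw [if_neg (by omega)]; omega⟩
    · rintro ⟨y, hy, rfl⟩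
      split_ifs <;> omega

lemma multisetPay_map_range {N m : ℕ} (hmN : m < N + 1) {a : ℕ → ℝ} {h : Multiset ℝ → ℝ}
    (hh : ∀ s : Multiset ℝ, h s = a 0 + ∑ j ∈ Finset.Icc 1 N, a j * kthHighest s j)
    {s : ℕ → ℝ} (hs : Antitone s) :
    multisetPay m h ((Multiset.range (N + 1)).map s) =
      (N + 1) * a 0 + linearPay N m a s := by
  have hterm : ∀ i ∈ Finset.range (N + 1),
      h (((Multiset.range (N + 1)).map s).erase (s i)) =
        a 0 + ∑ j ∈ Finset.Icc 1 N, a j * s (skipIndex i (j - 1)) := by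
    intro i hi
    have hi' : i < N + 1 := Finset.mem_range.1 hi
    have he : ((Multiset.range (N + 1)).map s).erase (s i) =
        (Multiset.range N).map (s ∘ skipIndex i) := by
      rw [← Multiset.map_erase_of_mem _ _ (Multiset.mem_range.2 hi'),
        range_erase_eq_map_skipIndex hi', Multiset.map_map]
    rw [he, hh]
    congr 1
    refine Finset.sum_congr rfl fun j hj => ?_
    rw [Finset.mem_Icc] at hj
    rw [kthHighest_map_range (hs.comp_monotone (skipIndex_mono i)) hj.1 hj.2]
    rfl
  have hsum : (((Multiset.range (N + 1)).map s).map
      fun x => h (((Multiset.range (N + 1)).map s).erase x)).sum =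
      ∑ i ∈ Finset.range (N + 1), h (((Multiset.range (N + 1)).map s).erase (s i)) := by
    rw [Multiset.map_map]; rfl
  rw [multisetPay, kthHighest_map_range hs (by omega) (by omega), hsum,
    Finset.sum_congr rfl hterm, Finset.sum_add_distrib]
  simp [linearPay, LinearMap.sum_apply]
  ring

lemma range_eq_map_val (n : ℕ) :
    Multiset.range n = (Finset.univ : Finset (Fin n)).val.map Fin.val := by
  have := congrArg Finset.val (Fin.map_valEmbedding_univ (n := n))
  rw [Finset.map_val, Nat.Iio_eq_range] at this
  exact this.symm

lemma exists_antitone_allBids {N : ℕ} (θ : Fin (N + 1) → ℝ) :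
    ∃ s : ℕ → ℝ, Antitone s ∧ allBids θ = (Multiset.range (N + 1)).map s ∧
      ∀ i, ∃ j, s i = θ j := by
  obtain ⟨σ, hσ⟩ : ∃ σ : Equiv.Perm (Fin (N + 1)), Antitone (θ ∘ σ) := by
    refine ⟨Tuple.sort (fun i => -θ i), fun i j hij => ?_⟩
    have := Tuple.monotone_sort (fun i => -θ i) hij
    simpa using this
  refine ⟨fun i => θ (σ ⟨min i N, by omega⟩), fun i j hij => hσ ?_, ?_, fun i => ⟨_, rfl⟩⟩
  · simp only [Fin.mk_le_mk]
    omega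
  · have h1 : allBids θ = allBids (θ ∘ σ) := by
      unfold allBids
      rw [← Multiset.map_map]
      congr 1
      exact (Multiset.map_univ_val_equiv σ).symm
    rw [h1, range_eq_map_val, Multiset.map_map, allBids]
    refine Multiset.map_congr rfl fun i _ => ?_
    simp only [Function.comp]
    congr 2
    ext
    simp only
    omega

/-- Decreasing sequences that start at `U` and end at `L` in position `N + 1`. -/
def IsProfile (N : ℕ) (L U : ℝ) (e : ℕ → ℝ) : Prop :=
  Antitone e ∧ e 0 = U ∧ ∀ i, N + 1 ≤ i → e i = L

lemma IsProfile.mem_Icc {N : ℕ} {L U : ℝ} {e : ℕ → ℝ} (he : IsProfile N L U e) (i : ℕ) :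
    e i ∈ Set.Icc L U := by
  obtain ⟨hanti, h0, hL⟩ := he
  refine ⟨?_, h0 ▸ hanti (Nat.zero_le i)⟩
  rw [← hL (max i (N + 1)) (le_max_right _ _)]
  exact hanti (le_max_left _ _)

/-- A sorted bid profile with a tie at position `k` (or an extreme bid at one of the two ends)
comes from a decreasing sequence by repeating an entry. -/
lemma exists_isProfile {N : ℕ} {L U : ℝ} {s : ℕ → ℝ} (hs : Antitone s)
    (hbox : ∀ i, s i ∈ Set.Icc L U) {k : ℕ} (hk : k ≤ N + 1)
    (h0 : k = 0 → s 0 = U) (hmid : 1 ≤ k → k ≤ N → s (k - 1) = s k) (hN : k = N + 1 → s N = L) :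
    ∃ e, IsProfile N L U e ∧ ∀ i < N + 1, s i = e (repeatIndex k i) := by
  have hLU : L ≤ U := (hbox 0).1.trans (hbox 0).2
  refine ⟨fun i => if i = 0 then U else if N + 1 ≤ i then L else
    if i ≤ k then s (i - 1) else s i, ⟨?_, by simp, ?_⟩, ?_⟩
  · intro i j hij
    have hi := hbox i
    have hi' := hbox (i - 1)
    have hj := hbox j
    have hj' := hbox (j - 1)
    simp only
    split_ifs
    all_goals first
      | omega
      | linarith [hi.1, hi.2, hj.1, hj.2, hi'.1, hi'.2, hj'.1, hj'.2]
      | exact hs (by omega)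
  · intro i hi
    simp only
    rw [if_neg (by omega), if_pos hi]
  · intro i hi
    by_cases hik : i < k
    · have hrep : repeatIndex k i = i + 1 := if_pos hik
      simp only [hrep]
      rw [if_neg (by omega)]
      by_cases hiN : N + 1 ≤ i + 1
      · rw [if_pos hiN, show i = N by omega]
        exact hN (by omega)
      · rw [if_neg hiN, if_pos (by omega), Nat.add_sub_cancel]
    · have hrep : repeatIndex k i = i := if_neg hik
      simp only [hrep]
      by_cases hi0 : i = 0
      · rw [if_pos hi0, hi0]
        exact h0 (by omega)
      · rw [if_neg hi0, if_neg (by omega)]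
        by_cases hki : i ≤ k
        · obtain rfl : i = k := by omega
          rw [if_pos le_rfl]
          exact (hmid (by omega) (by omega)).symm
        · rw [if_neg hki]

/-- Inserting a bid into a sorted profile gives a convex combination of two adjacent tie
profiles. -/
lemma exists_insert_profile {N : ℕ} {L U : ℝ} {e : ℕ → ℝ} (he : IsProfile N L U e) {x : ℝ}
    (hx : x ∈ Set.Icc L U) :
    ∃ p ≤ N, ∃ t u : ℝ, 0 ≤ t ∧ 0 ≤ u ∧ t + u = 1 ∧
      (Multiset.range (N + 1)).map
        (t • (e ∘ repeatIndex p) + u • (e ∘ repeatIndex (p + 1))) =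
      x ::ₘ (Multiset.range N).map fun i => e (i + 1) := by
  obtain ⟨p, hp, hlo, hhi⟩ : ∃ p ≤ N, e (p + 1) ≤ x ∧ x ≤ e p := by
    have hex : ∃ q, e q ≤ x ∧ 1 ≤ q := ⟨N + 1, by rw [he.2.2 _ le_rfl]; exact hx.1, by omega⟩
    classical
    obtain ⟨hq, hq1⟩ := Nat.find_spec hex
    have hle : Nat.find hex ≤ N + 1 :=
      Nat.find_min' hex ⟨by rw [he.2.2 _ le_rfl]; exact hx.1, by omega⟩
    refine ⟨Nat.find hex - 1, by omega, by rwa [Nat.sub_add_cancel hq1], ?_⟩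
    by_cases h1 : Nat.find hex - 1 = 0
    · rw [h1, he.2.1]
      exact hx.2
    · by_contra hlt
      exact Nat.find_min hex (m := Nat.find hex - 1) (by omega) ⟨(not_le.1 hlt).le, by omega⟩
  obtain ⟨u, t, hu, ht, hut, hxe⟩ : x ∈ segment ℝ (e (p + 1)) (e p) := by
    rw [segment_eq_Icc (hlo.trans hhi)]
    exact ⟨hlo, hhi⟩
  refine ⟨p, hp, t, u, ht, hu, by linarith, ?_⟩
  have hpr : p ∈ Multiset.range (N + 1) := Multiset.mem_range.2 (by omega)
  rw [← Multiset.cons_erase hpr, range_erase_eq_map_skipIndex (by omega), Multiset.map_cons,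
    Multiset.map_map]
  congr 1
  · rw [← hxe]
    simp [repeatIndex]
    ring
  · refine Multiset.map_congr rfl fun i _ => ?_
    have h1 : repeatIndex p (skipIndex p i) = i + 1 := by
      unfold repeatIndex skipIndex
      split_ifs <;> omega
    have h2 : repeatIndex (p + 1) (skipIndex p i) = i + 1 := by
      unfold repeatIndex skipIndex
      split_ifs <;> omega
    simp only [Function.comp_apply, Pi.add_apply, Pi.smul_apply, h1, h2, smul_eq_mul]
    rw [← add_mul, add_comm t u, hut, one_mul]

/-- A mechanism is dominated when some bid profile of the other players keeps the total payment
bounded away from zero. -/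
lemma dominatedMech_of_forall_le {N m : ℕ} {L U : ℝ} (hLU : L ≤ U) {h : Multiset ℝ → ℝ}
    (hfeas : ∀ θ : Fin (N + 1) → ℝ, (∀ i, θ i ∈ Set.Icc L U) → totalPay m (fun _ => h) θ ≤ 0)
    {y : ℕ → ℝ} (hy : ∀ i, y i ∈ Set.Icc L U) {ε : ℝ} (hε : 0 < ε)
    (hle : ∀ x ∈ Set.Icc L U, multisetPay m h (x ::ₘ (Multiset.range N).map y) ≤ -ε) :
    DominatedMech (N + 1) m L U h := by
  classical
  set Y := (Multiset.range N).map y with hY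
  refine ⟨fun i s => h s + if i = 0 ∧ s = Y then ε else 0, ?_, ?_, ?_⟩
  · intro θ hθ
    have hsplit : totalPay m (fun i s => h s + if i = 0 ∧ s = Y then ε else 0) θ =
        totalPay m (fun _ => h) θ + if otherBids θ 0 = Y then ε else 0 := by
      simp only [totalPay, Finset.sum_add_distrib, ← add_assoc]
      congr 1
      rw [Finset.sum_eq_single 0 (fun i _ hi => by simp [hi]) (by simp)]
      simp
    rw [hsplit]
    split_ifs with hc
    · have := hle (θ 0) (hθ 0)
      rw [totalPay_eq_multisetPay, allBids_eq_cons_otherBids θ 0, hc]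
      linarith
    · simpa using hfeas θ hθ
  · intro θ _ i
    simp only
    split_ifs <;> linarith
  · refine ⟨Fin.cons L fun i : Fin N => y i, fun i => ?_, 0, ?_⟩
    · refine Fin.cases ?_ (fun j => ?_) i
      · simpa using hLU
      · simpa using hy j
    · have hother : otherBids (Fin.cons L fun i : Fin N => y i : Fin (N + 1) → ℝ) 0 = Y := by
        have hcons := allBids_eq_cons_otherBids
          (Fin.cons L fun i : Fin N => y i : Fin (N + 1) → ℝ) 0
        rw [allBids, Fin.univ_succ, Finset.cons_val, Multiset.map_cons, Finset.map_val,
          Multiset.map_map] at hcons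
        rw [hY, range_eq_map_val, Multiset.map_map]
        exact ((Multiset.cons_inj_right _).1 hcons).symm
      rw [hother]
      simpa using hε

/-- If every tie region carries a profile with nonzero total payment, the
average of these profiles witnesses domination. -/
lemma dominatedMech_of_forall_exists {N m : ℕ} (hmN : m < N + 1) {L U : ℝ} (hLU : L ≤ U)
    {a : ℕ → ℝ} {h : Multiset ℝ → ℝ}
    (hh : ∀ s : Multiset ℝ, h s = a 0 + ∑ j ∈ Finset.Icc 1 N, a j * kthHighest s j)
    (hfeas : ∀ θ : Fin (N + 1) → ℝ, (∀ i, θ i ∈ Set.Icc L U) → totalPay m (fun _ => h) θ ≤ 0)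
    (hneg : ∀ k ≤ N + 1, ∃ e, IsProfile N L U e ∧
      multisetPay m h ((Multiset.range (N + 1)).map (e ∘ repeatIndex k)) ≠ 0) :
    DominatedMech (N + 1) m L U h := by
  set F : ℕ → (ℕ → ℝ) → ℝ := fun k e => (N + 1) * a 0 + linearPay N m a (e ∘ repeatIndex k)
    with hF
  have hpay : ∀ k e, IsProfile N L U e →
      multisetPay m h ((Multiset.range (N + 1)).map (e ∘ repeatIndex k)) = F k e := fun k e he =>
    multisetPay_map_range hmN hh (he.1.comp_monotone (repeatIndex_mono k))
  have hnonpos : ∀ k e, IsProfile N L U e → F k e ≤ 0 := by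
    intro k e he
    rw [← hpay k e he]
    have := hfeas (fun i => e (repeatIndex k i)) fun i => he.mem_Icc _
    rw [totalPay_eq_multisetPay] at this
    convert this using 2
    rw [range_eq_map_val, Multiset.map_map]
    rfl
  choose! E hE hEne using hneg
  have hElt : ∀ k ≤ N + 1, F k (E k) < 0 := fun k hk =>
    lt_of_le_of_ne (hnonpos k _ (hE k hk)) (hpay k _ (hE k hk) ▸ hEne k hk)
  set e : ℕ → ℝ := ((N : ℝ) + 2)⁻¹ • ∑ k ∈ Finset.range (N + 2), E k with he_def
  have hEr : ∀ k ∈ Finset.range (N + 2), IsProfile N L U (E k) := fun k hk =>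
    hE k (by rw [Finset.mem_range] at hk; omega)
  have he : IsProfile N L U e := by
    refine ⟨fun i j hij => ?_, ?_, fun i hi => ?_⟩
    · simp only [he_def, Pi.smul_apply, Finset.sum_apply, smul_eq_mul]
      exact mul_le_mul_of_nonneg_left (Finset.sum_le_sum fun k hk => (hEr k hk).1 hij)
        (by positivity)
    · simp only [he_def, Pi.smul_apply, Finset.sum_apply, smul_eq_mul]
      rw [Finset.sum_congr rfl fun k hk => (hEr k hk).2.1]
      simp
      field_simp
    · simp only [he_def, Pi.smul_apply, Finset.sum_apply, smul_eq_mul]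
      rw [Finset.sum_congr rfl fun k hk => (hEr k hk).2.2 i hi]
      simp
      field_simp
  have heneg : ∀ k ≤ N + 1, F k e < 0 := by
    intro k hk
    have havg : F k e = ((N : ℝ) + 2)⁻¹ * ∑ j ∈ Finset.range (N + 2), F k (E j) := by
      have hcomp : e ∘ repeatIndex k =
          ((N : ℝ) + 2)⁻¹ • ∑ j ∈ Finset.range (N + 2), E j ∘ repeatIndex k := by
        ext i
        simp [he_def]
      simp only [hF]
      rw [hcomp, map_smul, map_sum, Finset.sum_add_distrib]
      simp
      field_simp
    rw [havg]
    refine mul_neg_of_pos_of_neg (by positivity) ?_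
    exact Finset.sum_neg' (fun j hj => hnonpos k _ (hEr j hj))
      ⟨k, Finset.mem_range.2 (by omega), hElt k hk⟩
  obtain ⟨ε, hε, hεle⟩ : ∃ ε > 0, ∀ k ≤ N + 1, F k e ≤ -ε := by
    obtain ⟨k₀, hk₀, hmax⟩ := Finset.exists_max_image (Finset.range (N + 2)) (fun k => F k e)
      ⟨0, by simp⟩
    rw [Finset.mem_range] at hk₀
    refine ⟨-F k₀ e, by linarith [heneg k₀ (by omega)], fun k hk => ?_⟩
    rw [neg_neg]
    exact hmax k (Finset.mem_range.2 (by omega))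
  refine dominatedMech_of_forall_le hLU hfeas (y := fun i => e (i + 1)) (fun i => he.mem_Icc _) hε
    fun x hx => ?_
  obtain ⟨p, hp, t, u, ht, hu, htu, hmap⟩ := exists_insert_profile he hx
  have hanti : ∀ k, Antitone (e ∘ repeatIndex k) := fun k =>
    he.1.comp_monotone (repeatIndex_mono k)
  have hmix : Antitone (t • (e ∘ repeatIndex p) + u • (e ∘ repeatIndex (p + 1))) :=
    fun i j hij => add_le_add (mul_le_mul_of_nonneg_left (hanti p hij) ht)
      (mul_le_mul_of_nonneg_left (hanti (p + 1) hij) hu)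
  rw [← hmap, multisetPay_map_range hmN hh hmix, map_add, map_smul, map_smul]
  have h1 := mul_le_mul_of_nonneg_left (hεle p (by omega)) ht
  have h2 := mul_le_mul_of_nonneg_left (hεle (p + 1) (by omega)) hu
  simp only [hF] at h1 h2
  obtain rfl : u = 1 - t := by linarith
  simp only [smul_eq_mul]
  linarith

/-- a feasible anonymous *linear* Groves mechanism
(`h(θ_{-i}) = a_0 + ∑_{j=1}^{n−1} a_j [θ_{-i}]_j`) in a multi-unit auction
with unit demand is undominated only if its total payment function vanishes
identically on one of the regions `{[θ]_1 = U}`, `{[θ]_k = [θ]_{k+1}}` for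
some `k ∈ {1,...,n−1}`, or `{[θ]_n = L}`. -/
theorem undominated_linear_vanishes_on_region
    {n m : ℕ} (hm0 : 0 < m) (hmn : m < n) (L U : ℝ) (hLU : L < U)
    (a : ℕ → ℝ)
    (h : Multiset ℝ → ℝ)
    (hh : ∀ s : Multiset ℝ,
      h s = a 0 + ∑ j ∈ Finset.Icc 1 (n - 1), a j * kthHighest s j)
    (hfeas : ∀ θ : Fin n → ℝ, (∀ i, θ i ∈ Set.Icc L U) →
      totalPay m (fun _ => h) θ ≤ 0)
    (hundom : ¬ DominatedMech n m L U h) :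
    (∀ θ : Fin n → ℝ, (∀ i, θ i ∈ Set.Icc L U) →
      kthHighest (allBids θ) 1 = U → totalPay m (fun _ => h) θ = 0) ∨
    (∃ k ∈ Finset.Icc 1 (n - 1), ∀ θ : Fin n → ℝ, (∀ i, θ i ∈ Set.Icc L U) →
      kthHighest (allBids θ) k = kthHighest (allBids θ) (k + 1) →
      totalPay m (fun _ => h) θ = 0) ∨
    (∀ θ : Fin n → ℝ, (∀ i, θ i ∈ Set.Icc L U) →
      kthHighest (allBids θ) n = L → totalPay m (fun _ => h) θ = 0) := by
  obtain ⟨N, rfl⟩ : ∃ N, n = N + 1 := ⟨n - 1, by omega⟩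
  simp only [Nat.add_sub_cancel] at hh ⊢
  by_contra hcon
  push Not at hcon
  obtain ⟨hfirst, hmid, hlast⟩ := hcon
  refine hundom (dominatedMech_of_forall_exists hmn hLU.le hh hfeas fun k hk => ?_)
  obtain ⟨θ, hθ, hfirst', hmid', hlast', hne⟩ : ∃ θ : Fin (N + 1) → ℝ,
      (∀ i, θ i ∈ Set.Icc L U) ∧ (k = 0 → kthHighest (allBids θ) 1 = U) ∧
      (1 ≤ k → k ≤ N → kthHighest (allBids θ) k = kthHighest (allBids θ) (k + 1)) ∧
      (k = N + 1 → kthHighest (allBids θ) (N + 1) = L) ∧ totalPay m (fun _ => h) θ ≠ 0 := by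
    rcases Nat.eq_zero_or_pos k with rfl | hk0
    · obtain ⟨θ, hθ, h1, h2⟩ := hfirst
      exact ⟨θ, hθ, fun _ => h1, fun hc => by omega, fun hc => by omega, h2⟩
    · rcases hk.eq_or_lt with rfl | hkN
      · obtain ⟨θ, hθ, h1, h2⟩ := hlast
        exact ⟨θ, hθ, fun hc => by omega, fun _ hc => by omega, fun _ => h1, h2⟩
      · obtain ⟨θ, hθ, h1, h2⟩ := hmid k (Finset.mem_Icc.2 ⟨hk0, by omega⟩)
        exact ⟨θ, hθ, fun hc => by omega, fun _ _ => h1, fun hc => by omega, h2⟩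
  obtain ⟨s, hs, hall, hval⟩ := exists_antitone_allBids θ
  have hkth : ∀ j, 1 ≤ j → j ≤ N + 1 → kthHighest (allBids θ) j = s (j - 1) := fun j h1 h2 => by
    rw [hall, kthHighest_map_range hs h1 h2]
  obtain ⟨e, he, hse⟩ := exists_isProfile (L := L) (U := U) (N := N) (k := k) hs
    (fun i => by obtain ⟨j, hj⟩ := hval i; rw [hj]; exact hθ j) hk
    (fun hk0 => by rw [← hfirst' hk0, hkth 1 le_rfl (by omega)])
    (fun h1 h2 => by
      rw [← hkth k h1 hk, hmid' h1 h2, hkth (k + 1) (by omega) (by omega), Nat.add_sub_cancel])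
    (fun hkN => by rw [← hlast' hkN, hkth (N + 1) (by omega) le_rfl, Nat.add_sub_cancel])
  refine ⟨e, he, ?_⟩
  rwa [totalPay_eq_multisetPay, hall,
    Multiset.map_congr rfl fun i hi => hse i (Multiset.mem_range.1 hi)] at hne
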